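/- arXiv:1603.09365 — 3 statements merged into one kernel-verified Lean document; each statement's English description precedes it below -/
import Mathlib

section
/- For all 1 ≤ j ≤ k and every nondecreasing surjection f : {0,1,…,k} → {0,1,…,j}, the generalized tetris operation b ↦ f∘b from FIN_k to FIN_j is equal to a composition of multiple tetris operations; that is, there exist i_{j+1},…,i_k with 1 ≤ i_ℓ ≤ ℓ such that f∘b = (T_{i_{j+1}} ∘ T_{i_{j+2}} ∘ ⋯ ∘ T_{i_k})(b) for every b ∈ FIN_k, where each T_{i_ℓ} is taken as a map FIN_ℓ → FIN_{ℓ−1}. -/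
/-- `FIN k`: finitely supported functions `ℕ → {0,…,k}` attaining the maximum value `k`. -/
def FIN (k : ℕ) : Set (ℕ → ℕ) :=
  {b | (∀ n, b n ≤ k) ∧ {n | b n ≠ 0}.Finite ∧ ∃ n, b n = k}

/-- `f` is (the extension to `ℕ` of) a nondecreasing surjection `{0,…,k} → {0,…,j}`. -/
def IsTetrisFn (k j : ℕ) (f : ℕ → ℕ) : Prop :=
  (∀ i i', i' ≤ i → i ≤ k → f i' ≤ f i) ∧ (∀ i, i ≤ k → f i ≤ j) ∧
    ∀ m, m ≤ j → ∃ i, i ≤ k ∧ f i = m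

/-- The multiple tetris operation `T_i`: decrease by one every value that is `≥ i`. -/
def Tmul (i : ℕ) (b : ℕ → ℕ) : ℕ → ℕ := fun n => if i ≤ b n then b n - 1 else b n

/-!
A nondecreasing surjection `f : {0,…,k} → {0,…,j}` with `j < k` takes the same value at two
consecutive arguments `p` and `p + 1`. Hence `f = g ∘ σ`, where `σ` merges `p + 1` into `p` and
closes the gap, and `g` is the restriction of `f` to the arguments other than `p + 1`, renumbered as
`{0,…,k-1}`. Since `σ ∘ b = T_{p+1}(b)`, and `g` is again a nondecreasing surjection onto
`{0,…,j}`, induction on `k` reduces to `k = j`, where `f` is the identity.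
-/

namespace IsTetrisFn

variable {k j : ℕ} {f : ℕ → ℕ}

theorem map_zero (hf : IsTetrisFn k j f) : f 0 = 0 := by
  obtain ⟨hmono, -, hsurj⟩ := hf
  obtain ⟨i, hi, hfi⟩ := hsurj 0 j.zero_le
  exact Nat.le_zero.mp (hfi ▸ hmono i 0 i.zero_le hi)

theorem map_top (hf : IsTetrisFn k j f) : f k = j := by
  obtain ⟨hmono, hle, hsurj⟩ := hf
  obtain ⟨i, hi, hfi⟩ := hsurj j le_rfl
  exact le_antisymm (hle k le_rfl) (hfi ▸ hmono k i hi le_rfl)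

theorem map_succ_le (hf : IsTetrisFn k j f) {i : ℕ} (hi : i < k) : f (i + 1) ≤ f i + 1 := by
  obtain ⟨hmono, hle, hsurj⟩ := hf
  by_contra! hjump
  obtain ⟨m, hm, hfm⟩ := hsurj (f i + 1) (hjump.le.trans (hle (i + 1) hi))
  rcases le_or_gt m i with hmi | him
  · have : f m ≤ f i := hmono i m hmi hi.le
    omega
  · have : f (i + 1) ≤ f m := hmono m (i + 1) him hm
    omega

theorem map_add_le (hf : IsTetrisFn k j f) {i d : ℕ} (h : i + d ≤ k) :
    f (i + d) ≤ f i + d := by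
  induction d with
  | zero => exact le_rfl
  | succ d ih =>
    calc f (i + d + 1) ≤ f (i + d) + 1 := hf.map_succ_le h
      _ ≤ f i + d + 1 := Nat.succ_le_succ (ih (Nat.le_of_succ_le h))

theorem map_le_self (hf : IsTetrisFn k j f) {i : ℕ} (hi : i ≤ k) : f i ≤ i := by
  simpa only [zero_add, hf.map_zero] using hf.map_add_le (i := 0) (d := i) (by rwa [zero_add])

theorem codomain_le_domain (hf : IsTetrisFn k j f) : j ≤ k :=
  hf.map_top ▸ hf.map_le_self le_rfl

theorem map_eq_self (hf : IsTetrisFn k k f) {i : ℕ} (hi : i ≤ k) : f i = i := by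
  have hle : f i ≤ i := hf.map_le_self hi
  have htop : f (i + (k - i)) ≤ f i + (k - i) := hf.map_add_le (Nat.add_sub_of_le hi).le
  rw [Nat.add_sub_of_le hi, hf.map_top] at htop
  omega

theorem exists_map_eq_map_succ (hf : IsTetrisFn k j f) (hjk : j < k) :
    ∃ p < k, f p = f (p + 1) := by
  obtain ⟨hmono, hle, -⟩ := hf
  have hmaps : Set.MapsTo f (Finset.range (k + 1)) (Finset.range (j + 1)) := fun i hi => by
    simp only [Finset.coe_range, Set.mem_Iio, Nat.lt_succ_iff] at hi ⊢
    exact hle i hi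
  obtain ⟨p, hp, q, hq, hne, heq⟩ :=
    Finset.exists_ne_map_eq_of_card_lt_of_maps_to (by simpa using hjk) hmaps
  wlog hpq : p < q generalizing p q
  · exact this q hq p hp hne.symm heq.symm (hne.lt_or_gt.resolve_left hpq)
  have hqk : q ≤ k := Finset.mem_range_succ_iff.mp hq
  exact ⟨p, hpq.trans_le hqk, le_antisymm (hmono (p + 1) p p.le_succ (hpq.trans_le hqk))
    (heq ▸ hmono q (p + 1) hpq hqk)⟩

end IsTetrisFn

/-- The increasing enumeration of `ℕ ∖ {q}`, used to remove the argument `q` from a function. -/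
def skip (q m : ℕ) : ℕ := if q ≤ m then m + 1 else m

theorem skip_mono (q : ℕ) : Monotone (skip q) := by
  intro m n hmn
  unfold skip
  split_ifs <;> omega

theorem skip_le_succ (q m : ℕ) : skip q m ≤ m + 1 := by
  unfold skip
  split_ifs <;> omega

theorem Tmul_apply_le {i k n : ℕ} {b : ℕ → ℕ} (hi : i ≤ k + 1) (hb : b n ≤ k + 1) :
    Tmul i b n ≤ k := by
  unfold Tmul
  split_ifs <;> omega

theorem map_skip_Tmul {α : Type*} {f : ℕ → α} {p : ℕ} (hp : f p = f (p + 1)) (b : ℕ → ℕ) (n : ℕ) :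
    f (skip (p + 1) (Tmul (p + 1) b n)) = f (b n) := by
  rcases lt_trichotomy (b n) (p + 1) with hlt | heq | hgt
  · simp only [Tmul, skip, hlt.not_ge, if_false]
  · simp [Tmul, skip, heq, hp]
  · have hpred : p + 1 ≤ b n - 1 := Nat.le_sub_one_of_lt hgt
    have hpos : 1 ≤ b n := Nat.one_le_of_lt hgt
    simp only [Tmul, skip, hgt.le, hpred, if_true, Nat.sub_add_cancel hpos]

theorem IsTetrisFn.comp_skip {k j p : ℕ} {f : ℕ → ℕ} (hf : IsTetrisFn (k + 1) j f)
    (hpk : p ≤ k) (hp : f p = f (p + 1)) : IsTetrisFn k j (f ∘ skip (p + 1)) := by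
  obtain ⟨hmono, hle, hsurj⟩ := hf
  have hskip : ∀ i ≤ k, skip (p + 1) i ≤ k + 1 := fun i hi =>
    (skip_le_succ _ i).trans (Nat.succ_le_succ hi)
  refine ⟨fun i i' hii' hi => hmono _ _ (skip_mono _ hii') (hskip i hi),
    fun i hi => hle _ (hskip i hi), fun m hm => ?_⟩
  obtain ⟨i, hi, rfl⟩ := hsurj m hm
  exact ⟨Tmul (p + 1) id i, Tmul_apply_le (Nat.succ_le_succ hpk) hi, map_skip_Tmul hp id i⟩

/-- The composition `T_{i_{k-d+1}} ∘ ⋯ ∘ T_{i_k}` of `d` multiple tetris operations, with `T_{i_k}`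
applied first. -/
def tetrisComp (i : ℕ → ℕ) (k d : ℕ) (b : ℕ → ℕ) : ℕ → ℕ :=
  (List.range d).foldl (fun c s => Tmul (i (k - s)) c) b

theorem tetrisComp_succ (i : ℕ → ℕ) (k d : ℕ) (b : ℕ → ℕ) :
    tetrisComp i (k + 1) (d + 1) b = tetrisComp i k d (Tmul (i (k + 1)) b) := by
  simp only [tetrisComp, List.range_succ_eq_map, List.foldl_cons, List.foldl_map, Nat.sub_zero,
    Nat.succ_eq_add_one, Nat.add_sub_add_right]

theorem tetrisComp_congr {i i' : ℕ → ℕ} {k : ℕ} (h : ∀ l ≤ k, i l = i' l) (d : ℕ) (b : ℕ → ℕ) :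
    tetrisComp i k d b = tetrisComp i' k d b := by
  simp only [tetrisComp, h _ (Nat.sub_le k _)]

theorem tetris_is_composition_of_multiple_tetris_general {k j : ℕ} {f : ℕ → ℕ}
    (hf : IsTetrisFn k j f) :
    ∃ i : ℕ → ℕ, (∀ l, j < l → l ≤ k → 1 ≤ i l ∧ i l ≤ l) ∧
      ∀ b : ℕ → ℕ, (∀ n, b n ≤ k) → f ∘ b = tetrisComp i k (k - j) b := by
  induction k, hf.codomain_le_domain using Nat.le_induction generalizing f with
  | base =>
    refine ⟨id, fun l hjl hlj => absurd hlj hjl.not_ge, fun b hb => ?_⟩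
    rw [Nat.sub_self]
    exact funext fun n => hf.map_eq_self (hb n)
  | succ k hjk ih =>
    obtain ⟨p, hpk, hp⟩ := hf.exists_map_eq_map_succ (Nat.lt_succ_of_le hjk)
    obtain ⟨i, hi, hcomp⟩ := ih (hf.comp_skip (Nat.le_of_lt_succ hpk) hp)
    let i' := Function.update i (k + 1) (p + 1)
    have hnew : i' (k + 1) = p + 1 := Function.update_self ..
    have hold : ∀ l ≤ k, i l = i' l := fun l hl =>
      (Function.update_of_ne (Nat.lt_succ_of_le hl).ne ..).symm
    refine ⟨i', fun l hjl hlk => ?_, fun b hb => ?_⟩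
    · rcases Nat.le_succ_iff.mp hlk with hlk | rfl
      · exact hold l hlk ▸ hi l hjl hlk
      · exact hnew ▸ ⟨Nat.le_add_left 1 p, hpk⟩
    · calc f ∘ b = (f ∘ skip (p + 1)) ∘ Tmul (p + 1) b :=
            funext fun n => (map_skip_Tmul hp b n).symm
        _ = tetrisComp i k (k - j) (Tmul (p + 1) b) :=
            hcomp _ fun n => Tmul_apply_le hpk (hb n)
        _ = tetrisComp i' k (k - j) (Tmul (i' (k + 1)) b) := by
            rw [hnew, tetrisComp_congr hold]
        _ = tetrisComp i' (k + 1) (k + 1 - j) b := by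
            rw [Nat.succ_sub hjk, tetrisComp_succ]

/-- Every generalized tetris operation `FIN_k → FIN_j` (`1 ≤ j ≤ k`) is a composition
`T_{i_{j+1}} ∘ T_{i_{j+2}} ∘ ⋯ ∘ T_{i_k}` of multiple tetris operations, where
`1 ≤ i_ℓ ≤ ℓ` and `T_{i_ℓ}` is applied as a map `FIN_ℓ → FIN_{ℓ-1}`
(so `T_{i_k}` is applied first). -/
theorem tetris_is_composition_of_multiple_tetris (k j : ℕ) (hj : 1 ≤ j) (hjk : j ≤ k)
    (f : ℕ → ℕ) (hf : IsTetrisFn k j f) :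
    ∃ i : ℕ → ℕ, (∀ l, j < l → l ≤ k → 1 ≤ i l ∧ i l ≤ l) ∧
      ∀ b ∈ FIN k, f ∘ b = (List.range (k - j)).foldl (fun c s => Tmul (i (k - s)) c) b := by
  obtain ⟨i, hi, hcomp⟩ := tetris_is_composition_of_multiple_tetris_general hf
  exact ⟨i, hi, fun b hb => hcomp b hb.1⟩
end

section
/- Let k ≥ 1 and let (U_j)_{j=1}^{k} be cofinite ultrafilters on FIN_j such that for all 0 < j ≤ k and every nondecreasing surjection f : {0,…,k} → {0,…,j}, U_k + U_j = U_j + U_k = U_k and f(U_k) = U_j. Then for any sets A_j ∈ U_j (j = 1,…,k) there exists an infinite block sequence (b_n) in FIN_k such that TS_j(b_n) ⊆ A_j for every j = 1,2,…,k. -/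
/-!
Add the principal ultrafilter at `0` as `U_0`. Truncating values turns absorption by `U_k` into
`U_i + U_l = U_{max i l}` for all `i, l ≤ k`. Hence, if `A_j ∈ U_j` for all `j ≤ k`, then for
`U_k`-almost all `b` and every nondecreasing surjection `f : {0,…,k} → {0,…,i}`,

  `A_{max i j} ∈ U_{max i j} = U_i + U_j = f(U_k) + U_j`

gives `f ∘ b + a ∈ A_{max i j}` for `U_j`-almost all `a`. Only finitely many `f` matter, so the
sets of those `a` that work for all `i` and `f` again belong to the `U_j`. Choosing a block `b_0`
and passing to these smaller sets, then choosing `b_1` for them, and so on, yields the sequence: a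
tetris combination is seen to lie in the original sets by adding its summands from the last to the
first.
-/

open Filter

/-- `Supp b < Supp b'`. -/
def SuppLT (b b' : ℕ → ℕ) : Prop :=
  ∀ m, b m ≠ 0 → ∀ m', b' m' ≠ 0 → m < m'

/-- An infinite block sequence in `FIN k`. -/
def IsBlockSeq (k : ℕ) (b : ℕ → ℕ → ℕ) : Prop :=
  (∀ n, b n ∈ FIN k) ∧ ∀ n, SuppLT (b n) (b (n + 1))

/-- The tetris subspace `TS_j(b_n)` of `FIN j` generated by a block sequence in `FIN k`. -/
def TS (k j : ℕ) (b : ℕ → ℕ → ℕ) : Set (ℕ → ℕ) :=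
  {a | a ∈ FIN j ∧ ∃ (n : ℕ) (js : ℕ → ℕ) (fs : ℕ → ℕ → ℕ),
    (∀ i, i ≤ n → js i ≤ j ∧ IsTetrisFn k (js i) (fs i)) ∧
    (∃ i, i ≤ n ∧ js i = j) ∧
    a = ∑ i ∈ Finset.range (n + 1), (fs i) ∘ (b i)}

/-- An ultrafilter is cofinite if for every `n` the set of `b` with `b n = 0` belongs
to it. -/
def IsCofinite (U : Ultrafilter (ℕ → ℕ)) : Prop := ∀ n, {b : ℕ → ℕ | b n = 0} ∈ U

/-- `A ∈ U + V`. -/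
def memSum (U V : Ultrafilter (ℕ → ℕ)) (A : Set (ℕ → ℕ)) : Prop :=
  ∀ᶠ b in (U : Filter (ℕ → ℕ)), ∀ᶠ b' in (V : Filter (ℕ → ℕ)),
    SuppLT b b' ∧ b + b' ∈ A

/-- The generalized tetris operation `b ↦ f ∘ b`. -/
def tetrisMap (f : ℕ → ℕ) : (ℕ → ℕ) → ℕ → ℕ := fun b => f ∘ b

lemma FIN_zero : FIN 0 = {0} := by
  ext b
  refine ⟨fun hb => funext fun n => Nat.le_zero.1 (hb.1 n), ?_⟩
  rintro rfl
  simp [FIN]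

lemma IsTetrisFn.map_zero_s11 {k j : ℕ} {f : ℕ → ℕ} (hf : IsTetrisFn k j f) : f 0 = 0 := by
  obtain ⟨i, hi, h⟩ := hf.2.2 0 (Nat.zero_le _)
  exact Nat.le_zero.1 (h ▸ hf.1 i 0 (Nat.zero_le _) hi)

lemma isTetrisFn_min {k l : ℕ} (hl : l ≤ k) : IsTetrisFn k l (min · l) :=
  ⟨fun _ _ h _ => min_le_min_right _ h, fun _ _ => min_le_right _ _,
    fun i hi => ⟨i, hi.trans hl, min_eq_left hi⟩⟩

lemma finite_domRestrict_isTetrisFn (k j : ℕ) :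
    ((Set.Iic k).domRestrict '' {f : ℕ → ℕ | IsTetrisFn k j f}).Finite := by
  refine (Set.Finite.pi' fun _ : Set.Iic k => Set.finite_Iic j).subset ?_
  rintro _ ⟨f, hf, rfl⟩ ⟨i, hi⟩
  exact hf.2.1 i hi

/- Since `b x` takes values in `{0,…,k}`, only the finitely many restrictions of tetris functions
to `{0,…,k}` matter. -/
lemma eventually_forall_isTetrisFn {α : Type*} {F : Filter α} {k j : ℕ} {b : α → ℕ → ℕ}
    {p : (ℕ → ℕ) → α → Prop} (hb : ∀ᶠ x in F, ∀ n, b x n ≤ k)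
    (hp : ∀ f, IsTetrisFn k j f → ∀ᶠ x in F, p (f ∘ b x) x) :
    ∀ᶠ x in F, ∀ f, IsTetrisFn k j f → p (f ∘ b x) x := by
  have hrestrict : ∀ᶠ x in F, ∀ r ∈ (Set.Iic k).domRestrict '' {f : ℕ → ℕ | IsTetrisFn k j f},
      ∀ f : ℕ → ℕ, (Set.Iic k).domRestrict f = r → p (f ∘ b x) x := by
    refine (eventually_all_finite (finite_domRestrict_isTetrisFn k j)).2 ?_
    rintro _ ⟨g, hg, rfl⟩
    filter_upwards [hb, hp g hg] with x hx hpx f hfg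
    have hcomp : f ∘ b x = g ∘ b x :=
      funext fun n => Set.domRestrict_eq_domRestrict_iff.1 hfg (hx n)
    rwa [hcomp]
  filter_upwards [hrestrict] with x hx f hf
  exact hx _ (Set.mem_image_of_mem _ hf) f rfl

lemma tetrisMap_add {f b c : ℕ → ℕ} (hf : f 0 = 0) (h : SuppLT b c) :
    tetrisMap f (b + c) = tetrisMap f b + tetrisMap f c := by
  funext n
  rcases eq_or_ne (b n) 0 with hb | hb
  · simp [tetrisMap, hb, hf]
  · have hc : c n = 0 := by
      by_contra hc
      exact lt_irrefl n (h n hb n hc)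
    simp [tetrisMap, hc, hf]

lemma IsCofinite.eventually_suppLT {U : Ultrafilter (ℕ → ℕ)} (hU : IsCofinite U) {b : ℕ → ℕ}
    (hb : {n | b n ≠ 0}.Finite) : ∀ᶠ c in U, SuppLT b c := by
  obtain ⟨N, hN⟩ := hb.bddAbove
  have hzero : ∀ᶠ c : ℕ → ℕ in U, ∀ n ∈ Set.Iic N, c n = 0 :=
    (eventually_all_finite (Set.finite_Iic N)).2 fun n _ => hU n
  filter_upwards [hzero] with c hc m hm m' hm'
  by_contra hlt
  exact hm' (hc m' ((not_lt.1 hlt).trans (hN hm)))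

section UltrafilterSum

attribute [local instance] Ultrafilter.add

lemma add_eq_of_forall_memSum {U V W : Ultrafilter (ℕ → ℕ)} (h : ∀ A ∈ W, memSum U V A) :
    U + V = W :=
  Ultrafilter.coe_le_coe.1 fun A hA => (h A hA).mono fun _ hb => hb.mono fun _ hc => hc.2

lemma map_tetrisMap_add {U V : Ultrafilter (ℕ → ℕ)} {f : ℕ → ℕ} (hf : f 0 = 0)
    (h : ∀ᶠ b in U, ∀ᶠ c in V, SuppLT b c) :
    (U + V).map (tetrisMap f) = U.map (tetrisMap f) + V.map (tetrisMap f) := by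
  refine Ultrafilter.coe_inj.1 (Filter.ext' fun p => ?_)
  change (∀ᶠ b in U, ∀ᶠ c in V, p (tetrisMap f (b + c))) ↔
    ∀ᶠ b in U, ∀ᶠ c in V, p (tetrisMap f b + tetrisMap f c)
  exact eventually_congr <| h.mono fun b hb => eventually_congr <| hb.mono fun c hbc => by
    rw [tetrisMap_add hf hbc]

lemma map_tetrisMap_min {U : Ultrafilter (ℕ → ℕ)} {i l : ℕ} (hU : FIN i ∈ U) (hil : i ≤ l) :
    U.map (tetrisMap (min · l)) = U := by
  have hfix : tetrisMap (min · l) =ᶠ[U] id :=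
    mem_of_superset hU fun b hb => funext fun n => min_eq_left ((hb.1 n).trans hil)
  exact Ultrafilter.coe_inj.1 ((map_congr hfix).trans map_id)

lemma ultrafilter_pure_zero_add {M : Type*} [AddZeroClass M] (U : Ultrafilter M) : pure 0 + U = U :=
  Ultrafilter.coe_inj.1 <| Filter.ext' fun p => by simp [Ultrafilter.eventually_add]

lemma ultrafilter_add_pure_zero {M : Type*} [AddZeroClass M] (U : Ultrafilter M) : U + pure 0 = U :=
  Ultrafilter.coe_inj.1 <| Filter.ext' fun p => by simp [Ultrafilter.eventually_add]

/-- A family of ultrafilters as in the theorem, with a degree `0` member added and with absorption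
required in all degrees: `V i + V l = V (max i l)`. Since `FIN 0 = {0}`, the ultrafilter `V 0` is
principal at `0`; it accounts for summands `f ∘ b` with `f = 0`. -/
structure IsCoherentFamily (k : ℕ) (V : ℕ → Ultrafilter (ℕ → ℕ)) : Prop where
  FIN_mem : ∀ j ≤ k, FIN j ∈ V j
  isCofinite : ∀ j ≤ k, IsCofinite (V j)
  add_eq : ∀ i ≤ k, ∀ l ≤ k, V i + V l = V (max i l)
  map_eq : ∀ j ≤ k, ∀ f, IsTetrisFn k j f → (V k).map (tetrisMap f) = V j

/- The truncation `min · l` maps `U k` to `U l` and fixes `U i` for `i ≤ l`, so it carries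
`U i + U k = U k` to `U i + U l = U l`, and likewise with the summands exchanged. -/
lemma add_eq_max_of_absorbing {k i l : ℕ} {U : ℕ → Ultrafilter (ℕ → ℕ)}
    (hU : ∀ j, 1 ≤ j → j ≤ k → FIN j ∈ U j ∧ IsCofinite (U j))
    (hadd : ∀ j, 0 < j → j ≤ k → U k + U j = U k ∧ U j + U k = U k)
    (hmap : ∀ j, 0 < j → j ≤ k → ∀ f, IsTetrisFn k j f → (U k).map (tetrisMap f) = U j)
    (hi₀ : 0 < i) (hi : i ≤ k) (hl₀ : 0 < l) (hl : l ≤ k) :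
    U i + U l = U (max i l) := by
  have hk₀ : 0 < k := hi₀.trans_le hi
  have hsupp : ∀ m n, 0 < m → m ≤ k → 0 < n → n ≤ k →
      ∀ᶠ b in U m, ∀ᶠ c in U n, SuppLT b c := fun m n hm₀ hm hn₀ hn =>
    mem_of_superset (hU m hm₀ hm).1 fun b hb => (hU n hn₀ hn).2.eventually_suppLT hb.2.1
  rcases le_total i l with hil | hli
  · have htrunc := hmap l hl₀ hl _ (isTetrisFn_min hl)
    calc U i + U l
        = (U i).map (tetrisMap (min · l)) + (U k).map (tetrisMap (min · l)) := by
          rw [map_tetrisMap_min (hU i hi₀ hi).1 hil, htrunc]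
      _ = (U i + U k).map (tetrisMap (min · l)) :=
          (map_tetrisMap_add (Nat.zero_min l) (hsupp i k hi₀ hi hk₀ le_rfl)).symm
      _ = U (max i l) := by rw [(hadd i hi₀ hi).2, htrunc, max_eq_right hil]
  · have htrunc := hmap i hi₀ hi _ (isTetrisFn_min hi)
    calc U i + U l
        = (U k).map (tetrisMap (min · i)) + (U l).map (tetrisMap (min · i)) := by
          rw [map_tetrisMap_min (hU l hl₀ hl).1 hli, htrunc]
      _ = (U k + U l).map (tetrisMap (min · i)) :=
          (map_tetrisMap_add (Nat.zero_min i) (hsupp k l hk₀ le_rfl hl₀ hl)).symm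
      _ = U (max i l) := by rw [(hadd l hl₀ hl).1, htrunc, max_eq_left hli]

lemma isCoherentFamily_update_zero {k : ℕ} {U : ℕ → Ultrafilter (ℕ → ℕ)}
    (hU : ∀ j, 1 ≤ j → j ≤ k → FIN j ∈ U j ∧ IsCofinite (U j))
    (hadd : ∀ j, 0 < j → j ≤ k → U k + U j = U k ∧ U j + U k = U k)
    (hmap : ∀ j, 0 < j → j ≤ k → ∀ f, IsTetrisFn k j f → (U k).map (tetrisMap f) = U j) :
    IsCoherentFamily k (Function.update U 0 (pure 0)) := by
  have hFIN : ∀ j ≤ k, FIN j ∈ Function.update U 0 (pure 0) j := by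
    rintro (_ | j) hj
    · simp [FIN_zero]
    · simpa using (hU (j + 1) j.succ_pos hj).1
  refine ⟨hFIN, ?_, ?_, ?_⟩
  · rintro (_ | j) hj
    · simp [IsCofinite]
    · simpa using (hU (j + 1) j.succ_pos hj).2
  · rintro (_ | i) hi (_ | l) hl
    · simp [ultrafilter_pure_zero_add]
    · simp [ultrafilter_pure_zero_add]
    · simp [ultrafilter_add_pure_zero]
    · have hmax : max (i + 1) (l + 1) ≠ 0 := (lt_max_of_lt_left i.succ_pos).ne'
      simpa [Function.update_of_ne hmax] using
        add_eq_max_of_absorbing hU hadd hmap i.succ_pos hi l.succ_pos hl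
  · rintro (_ | j) hj f hf
    · have hconst : tetrisMap f =ᶠ[Function.update U 0 (pure 0) k] fun _ => 0 :=
        mem_of_superset (hFIN k le_rfl) fun b hb =>
          funext fun n => Nat.le_zero.1 (hf.2.1 _ (hb.1 n))
      exact Ultrafilter.coe_inj.1 ((map_congr hconst).trans Filter.map_const)
    · have hk₀ : k ≠ 0 := by omega
      simpa [Function.update_of_ne hk₀] using hmap (j + 1) j.succ_pos hj f hf

/-- The conditions imposed on the remaining summands `a` of degree `j`, once the block `b` has been
chosen, so that all tetris combinations starting with `b` end up in the sets `A`. -/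
def tetrisResidual (k : ℕ) (b : ℕ → ℕ) (A : ℕ → Set (ℕ → ℕ)) (j : ℕ) : Set (ℕ → ℕ) :=
  {a | SuppLT b a ∧ ∀ i ≤ k, ∀ f, IsTetrisFn k i f → f ∘ b + a ∈ A (max i j)}

lemma IsCoherentFamily.eventually_tetrisResidual_mem {k : ℕ} {V : ℕ → Ultrafilter (ℕ → ℕ)}
    (hV : IsCoherentFamily k V) {A : ℕ → Set (ℕ → ℕ)} (hA : ∀ j ≤ k, A j ∈ V j) :
    ∀ᶠ b in V k, ∀ j ≤ k, tetrisResidual k b A j ∈ V j := by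
  have hbound : ∀ᶠ b : ℕ → ℕ in V k, ∀ n, b n ≤ k :=
    mem_of_superset (hV.FIN_mem k le_rfl) fun _ hb => hb.1
  have htetris : ∀ᶠ b in V k, ∀ j ∈ Set.Iic k, ∀ i ∈ Set.Iic k, ∀ f, IsTetrisFn k i f →
      ∀ᶠ a in V j, f ∘ b + a ∈ A (max i j) := by
    refine (eventually_all_finite (Set.finite_Iic k)).2 fun j hj =>
      (eventually_all_finite (Set.finite_Iic k)).2 fun i hi =>
        eventually_forall_isTetrisFn (p := fun g _ => ∀ᶠ a in V j, g + a ∈ A (max i j)) hbound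
          fun f hf => ?_
    have hsum : A (max i j) ∈ (V k).map (tetrisMap f) + V j := by
      rw [hV.map_eq i hi f hf, hV.add_eq i hi j hj]
      exact hA _ (max_le hi hj)
    exact hsum
  filter_upwards [hV.FIN_mem k le_rfl, htetris] with b hb hbA j hj
  refine ((hV.isCofinite j hj).eventually_suppLT hb.2.1).and
    ((eventually_all_finite (Set.finite_Iic k)).2 fun i hi => ?_)
  exact eventually_forall_isTetrisFn (b := fun _ => b) (p := fun g a => g + a ∈ A (max i j))
    (.of_forall fun _ => hb.1) (hbA j hj i hi)

end UltrafilterSum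

/-- A fusion sequence: each block `b n` lies in the current degree `k` set `S n k`, and the next
family of sets is the residual of the current one along `b n`. -/
structure IsFusion (k : ℕ) (b : ℕ → ℕ → ℕ) (S : ℕ → ℕ → Set (ℕ → ℕ)) : Prop where
  mem_FIN : ∀ n, b n ∈ FIN k
  mem : ∀ n, b n ∈ S n k
  zero_mem : ∀ n, 0 ∈ S n 0
  residual : ∀ n, S (n + 1) = tetrisResidual k (b n) (S n)

namespace IsFusion

variable {k : ℕ} {b : ℕ → ℕ → ℕ} {S : ℕ → ℕ → Set (ℕ → ℕ)}

lemma isBlockSeq (h : IsFusion k b S) : IsBlockSeq k b := by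
  refine ⟨h.mem_FIN, fun n => ?_⟩
  have hmem := h.mem (n + 1)
  rw [h.residual] at hmem
  exact hmem.1

lemma sum_Ico_mem (h : IsFusion k b S) {js : ℕ → ℕ} {fs : ℕ → ℕ → ℕ} {m n : ℕ} (hmn : m ≤ n)
    (hfs : ∀ i < n, js i ≤ k ∧ IsTetrisFn k (js i) (fs i)) :
    ∑ i ∈ Finset.Ico m n, fs i ∘ b i ∈ S m ((Finset.Ico m n).sup js) := by
  induction hmn using Nat.decreasingInduction with
  | self => simpa using h.zero_mem n
  | of_succ m hm ih =>
    rw [h.residual] at ih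
    rw [← Finset.insert_Ico_add_one_left_eq_Ico hm, Finset.sum_insert (by simp), Finset.sup_insert]
    exact ih.2 (js m) (hfs m hm).1 (fs m) (hfs m hm).2

lemma TS_subset (h : IsFusion k b S) {j : ℕ} (hj : j ≤ k) : TS k j b ⊆ S 0 j := by
  rintro _ ⟨-, n, js, fs, hfs, ⟨i, hi, hij⟩, rfl⟩
  have hfs' : ∀ i < n + 1, js i ≤ k ∧ IsTetrisFn k (js i) (fs i) := fun i hi =>
    have hin := hfs i (Nat.le_of_lt_succ hi)
    ⟨hin.1.trans hj, hin.2⟩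
  have hsup : (Finset.range (n + 1)).sup js = j := by
    refine le_antisymm (Finset.sup_le fun i hi => (hfs i (Finset.mem_range_succ_iff.1 hi)).1) ?_
    exact hij ▸ Finset.le_sup (Finset.mem_range_succ_iff.2 hi)
  have hmem := h.sum_Ico_mem (Nat.zero_le (n + 1)) hfs'
  rwa [← Finset.range_eq_Ico, hsup] at hmem

end IsFusion

lemma IsCoherentFamily.exists_isFusion {k : ℕ} {V : ℕ → Ultrafilter (ℕ → ℕ)}
    (hV : IsCoherentFamily k V) {A : ℕ → Set (ℕ → ℕ)} (hA : ∀ j ≤ k, A j ∈ V j) :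
    ∃ b S, IsFusion k b S ∧ S 0 = A := by
  have hblock : ∀ B : ℕ → Set (ℕ → ℕ), (∀ j ≤ k, B j ∈ V j) →
      ∃ b ∈ FIN k, b ∈ B k ∧ ∀ j ≤ k, tetrisResidual k b B j ∈ V j := fun B hB =>
    (V k).nonempty_of_mem <| inter_mem (hV.FIN_mem k le_rfl) <|
      inter_mem (hB k le_rfl) (hV.eventually_tetrisResidual_mem hB)
  choose! block hFIN hmem hresidual using hblock
  let S : ℕ → ℕ → Set (ℕ → ℕ) := fun n => (fun B => tetrisResidual k (block B) B)^[n] A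
  have hS_succ : ∀ n, S (n + 1) = tetrisResidual k (block (S n)) (S n) := fun n =>
    Function.iterate_succ_apply' _ n A
  have hS : ∀ n, ∀ j ≤ k, S n j ∈ V j := by
    intro n
    induction n with
    | zero => exact hA
    | succ n ih => exact hS_succ n ▸ hresidual (S n) ih
  have hzero : ∀ n, 0 ∈ S n 0 := fun n => by
    obtain ⟨a, haS, haFIN⟩ := (V 0).nonempty_of_mem
      (inter_mem (hS n 0 k.zero_le) (hV.FIN_mem 0 k.zero_le))
    rw [FIN_zero, Set.mem_singleton_iff] at haFIN
    exact haFIN ▸ haS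
  exact ⟨fun n => block (S n), S,
    ⟨fun n => hFIN _ (hS n), fun n => hmem _ (hS n), hzero, hS_succ⟩, rfl⟩

/-- Given cofinite ultrafilters `U_1, …, U_k` with `U_k + U_j = U_j + U_k = U_k` and
`f(U_k) = U_j` for all `0 < j ≤ k` and nondecreasing surjections `f : {0,…,k} → {0,…,j}`,
and sets `A_j ∈ U_j`, there is an infinite block sequence `(b_n)` in `FIN k` with
`TS_j(b_n) ⊆ A_j` for every `j = 1,…,k`. -/
theorem block_sequence_from_coherent_ultrafilters (k : ℕ) (hk : 1 ≤ k)
    (U : ℕ → Ultrafilter (ℕ → ℕ))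
    (hU : ∀ j, 1 ≤ j → j ≤ k → FIN j ∈ U j ∧ IsCofinite (U j))
    (hsum : ∀ j, 0 < j → j ≤ k →
      (∀ A : Set (ℕ → ℕ), memSum (U k) (U j) A ↔ A ∈ U k) ∧
      (∀ A : Set (ℕ → ℕ), memSum (U j) (U k) A ↔ A ∈ U k))
    (hmap : ∀ j, 0 < j → j ≤ k →
      ∀ f : ℕ → ℕ, IsTetrisFn k j f → (U k).map (tetrisMap f) = U j)
    (A : ℕ → Set (ℕ → ℕ)) (hA : ∀ j, 1 ≤ j → j ≤ k → A j ∈ U j) :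
    ∃ b : ℕ → ℕ → ℕ, IsBlockSeq k b ∧ ∀ j, 1 ≤ j → j ≤ k → TS k j b ⊆ A j := by
  have hV : IsCoherentFamily k (Function.update U 0 (pure 0)) :=
    isCoherentFamily_update_zero hU
      (fun j hj hjk => ⟨add_eq_of_forall_memSum fun B => ((hsum j hj hjk).1 B).2,
        add_eq_of_forall_memSum fun B => ((hsum j hj hjk).2 B).2⟩) hmap
  have hA' : ∀ j ≤ k, Function.update A 0 Set.univ j ∈ Function.update U 0 (pure 0) j := by
    rintro (_ | j) hj
    · simp
    · simpa using hA (j + 1) j.succ_pos hj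
  obtain ⟨b, S, hbS, hS⟩ := hV.exists_isFusion hA'
  refine ⟨b, hbS.isBlockSeq, fun j hj hjk => ?_⟩
  simpa [hS, Function.update_of_ne (Nat.one_le_iff_ne_zero.1 hj)] using hbS.TS_subset hjk
end

section
/- (Milliken–Taylor theorem on finite unions.) Fix m ≥ 1. For any finite coloring of FIN_1^[m], the set of block sequences in FIN_1 of length m, there exists an infinite block sequence (b_n) in FIN_1 such that the set TS_1(b_n)^[m] of all m-tuples of the form (b_{n_0} + ⋯ + b_{n_{ℓ_0}−1}, b_{n_{ℓ_0}} + ⋯ + b_{n_{ℓ_1}−1}, …, b_{n_{ℓ_{m−1}}} + ⋯ + b_{n_{ℓ_m}−1}) for 0 < ℓ_0 < ℓ_1 < ⋯ < ℓ_m and 0 ≤ n_0 < n_1 < ⋯ < n_{ℓ_m−1}, is monochromatic. -/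
/-- An element of `FIN_k^[m]`: a block sequence in `FIN k` of length `m`. -/
def IsBlockTuple (k m : ℕ) (t : Fin m → ℕ → ℕ) : Prop :=
  (∀ d, t d ∈ FIN k) ∧
    ∀ (d : ℕ) (h : d + 1 < m), SuppLT (t ⟨d, Nat.lt_of_succ_lt h⟩) (t ⟨d + 1, h⟩)

/-- The Milliken–Taylor set `TS_1(b_n)^[m]`: all `m`-tuples whose `d`-th entry is
`b_{n_{l_d}} + ⋯ + b_{n_{l_{d+1}-1}}`, for some strictly increasing `(n_s)` and some
`0 = l_0 < l_1 < ⋯ < l_m`. -/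
def MTset (m : ℕ) (b : ℕ → ℕ → ℕ) : Set (Fin m → ℕ → ℕ) :=
  {a | ∃ (l : ℕ → ℕ) (n : ℕ → ℕ), l 0 = 0 ∧ (∀ d, d < m → l d < l (d + 1)) ∧
    StrictMono n ∧
    ∀ d : Fin m, a d = ∑ s ∈ Finset.Ico (l d.val) (l (d.val + 1)), b (n s)}

open Filter Topology

attribute [local instance] Ultrafilter.add Ultrafilter.addSemigroup

theorem exists_idempotent_ultrafilter_le {M : Type*} [AddSemigroup M] {F : Filter M} [F.NeBot]
    (hF : ∀ s ∈ F, ∀ᶠ x in F, ∀ᶠ y in F, x + y ∈ s) :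
    ∃ U : Ultrafilter M, U + U = U ∧ ↑U ≤ F := by
  let S : Set (Ultrafilter M) := {U | ↑U ≤ F}
  have hS : IsClosed S := by
    have : S = ⋂ s ∈ F, {U : Ultrafilter M | s ∈ U} := by
      ext U
      simp [S, le_def]
    rw [this]
    exact isClosed_biInter fun s _ => ultrafilter_isClosed_basic s
  have hadd : ∀ U ∈ S, ∀ V ∈ S, U + V ∈ S := fun U hU V hV s hs =>
    ((hF s hs).filter_mono hU).mono fun _ hx => hx.filter_mono hV
  obtain ⟨U, hU, hidem⟩ := exists_idempotent_in_compact_add_subsemigroup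
    Ultrafilter.continuous_add_left S (Ultrafilter.exists_le F) hS.isCompact hadd
  exact ⟨U, hidem, hU⟩

section UltrafilterTree

variable {M : Type*} {U : Ultrafilter M} {Q Q' : Set (List M)} {m : ℕ}

/-- A `U`-tree: a set of finite sequences containing the empty one and, with each member, its
one-term extensions by `U`-almost every `x`. Sequences are lists with the last term at the head. -/
structure IsUltrafilterTree (U : Ultrafilter M) (Q : Set (List M)) : Prop where
  nil_mem : [] ∈ Q
  eventually_cons_mem : ∀ L ∈ Q, ∀ᶠ x in U, x :: L ∈ Q

theorem IsUltrafilterTree.inter (hQ : IsUltrafilterTree U Q) (hQ' : IsUltrafilterTree U Q') :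
    IsUltrafilterTree U (Q ∩ Q') where
  nil_mem := ⟨hQ.nil_mem, hQ'.nil_mem⟩
  eventually_cons_mem L hL := (hQ.eventually_cons_mem L hL.1).and (hQ'.eventually_cons_mem L hL.2)

/-- The `k`-fold tensor power of `U`, as an ultrafilter on the extensions of `L` by `k` terms. -/
def tensorPower (U : Ultrafilter M) : ℕ → List M → Ultrafilter (List M)
  | 0, L => pure L
  | k + 1, L => U.bind fun x => tensorPower U k (x :: L)

theorem eventually_tensorPower_succ {k : ℕ} {L : List M} {p : List M → Prop} :
    (∀ᶠ L' in tensorPower U (k + 1) L, p L') ↔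
      ∀ᶠ x in U, ∀ᶠ L' in tensorPower U k (x :: L), p L' :=
  Iff.rfl

theorem eventually_length_tensorPower (U : Ultrafilter M) (k : ℕ) (L : List M) :
    ∀ᶠ L' : List M in tensorPower U k L, L'.length = L.length + k := by
  induction k generalizing L with
  | zero => exact eventually_pure.2 rfl
  | succ k ih =>
    refine eventually_tensorPower_succ.2 (Eventually.of_forall fun x => ?_)
    filter_upwards [ih (x :: L)] with L' hL'
    rw [hL', List.length_cons]
    omega

theorem IsUltrafilterTree.eventually_mem_tensorPower (hQ : IsUltrafilterTree U Q) (k : ℕ)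
    {L : List M} (hL : L ∈ Q) : ∀ᶠ L' in tensorPower U k L, L' ∈ Q := by
  induction k generalizing L with
  | zero => exact eventually_pure.2 hL
  | succ k ih =>
    exact eventually_tensorPower_succ.2 ((hQ.eventually_cons_mem L hL).mono fun _ => ih)

theorem isUltrafilterTree_of_eventually_tensorPower {p : List M → Prop}
    (hp : ∀ᶠ L in tensorPower U m [], p L) :
    IsUltrafilterTree U {L | ∀ k, L.length + k = m → ∀ᶠ L' in tensorPower U k L, p L'} where
  nil_mem k hk := by
    obtain rfl : k = m := by simpa using hk
    exact hp
  eventually_cons_mem L hL := by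
    by_cases hlen : L.length < m
    · obtain ⟨k, rfl⟩ := Nat.exists_eq_add_of_lt hlen
      filter_upwards [eventually_tensorPower_succ.1 (hL (k + 1) rfl)] with x hx k' hk'
      obtain rfl : k' = k := by
        rw [List.length_cons] at hk'
        omega
      exact hx
    · refine Eventually.of_forall fun x k hk => ?_
      rw [List.length_cons] at hk
      omega

theorem exists_reverse_ofFn_eq {L : List M} (hL : L.length = m) :
    ∃ t : Fin m → M, (List.ofFn t).reverse = L := by
  obtain ⟨L, rfl⟩ := List.reverse_surjective L
  obtain rfl : L.length = m := by simpa using hL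
  exact ⟨L.get, by simp⟩

theorem IsUltrafilterTree.exists_monochromatic_subtree {α : Type*} (hQ : IsUltrafilterTree U Q)
    {c : (Fin m → M) → α} (hc : (c '' {t | (List.ofFn t).reverse ∈ Q}).Finite) :
    ∃ j, ∃ Q' ⊆ Q, IsUltrafilterTree U Q' ∧ ∀ t, (List.ofFn t).reverse ∈ Q' → c t = j := by
  have hcolor : ∀ᶠ L in tensorPower U m [], ∃ j ∈ c '' {t | (List.ofFn t).reverse ∈ Q},
      ∀ t, (List.ofFn t).reverse = L → c t = j := by
    filter_upwards [hQ.eventually_mem_tensorPower m hQ.nil_mem,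
      eventually_length_tensorPower U m []] with L hL hlen
    obtain ⟨t, rfl⟩ := exists_reverse_ofFn_eq (hlen.trans (Nat.zero_add m))
    refine ⟨c t, Set.mem_image_of_mem c hL, fun t' ht' => ?_⟩
    rw [List.ofFn_injective (List.reverse_injective ht')]
  obtain ⟨j, -, hj⟩ := (Ultrafilter.eventually_exists_mem_iff hc).1 hcolor
  refine ⟨j, _, Set.inter_subset_left,
    hQ.inter (isUltrafilterTree_of_eventually_tensorPower hj), fun t ht => ?_⟩
  exact eventually_pure.1 (ht.2 0 (by simp)) t rfl

end UltrafilterTree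

section SumLists

variable {M : Type*} [AddSemigroup M] {U : Ultrafilter M} {Q : Set (List M)} {L : List M}

theorem eventually_eventually_add (hU : U + U = U) {p : M → Prop} (hp : ∀ᶠ x in U, p x) :
    ∀ᶠ x in U, ∀ᶠ y in U, p (x + y) := by
  rwa [← Ultrafilter.eventually_add, hU]

/-- The members of `Q` that remain in `Q` when `U`-almost any `y` is added to their last term. -/
def absorbing (U : Ultrafilter M) (Q : Set (List M)) : Set (List M) :=
  {L | L ∈ Q ∧ ∀ᶠ y in U, L.modifyHead (· + y) ∈ Q}

theorem isUltrafilterTree_absorbing (hU : U + U = U) (hQ : IsUltrafilterTree U Q) :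
    IsUltrafilterTree U (absorbing U Q) where
  nil_mem := ⟨hQ.nil_mem, Eventually.of_forall fun _ => hQ.nil_mem⟩
  eventually_cons_mem L hL :=
    have hcons := hQ.eventually_cons_mem L hL.1
    hcons.and (eventually_eventually_add hU hcons)

theorem eventually_modifyHead_mem_absorbing (hU : U + U = U) (hL : L ∈ absorbing U Q) :
    ∀ᶠ y in U, L.modifyHead (· + y) ∈ absorbing U Q := by
  filter_upwards [hL.2, eventually_eventually_add hU hL.2] with y hy hyz
  refine ⟨hy, hyz.mono fun z hz => ?_⟩
  simpa only [List.modifyHead_modifyHead, Function.comp_def, add_assoc] using hz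

/-- The sequences obtained from those in `S` when a further summand `y` becomes available: `y` is
ignored, opens a new term, or is added to the last term. -/
def addSummand (y : M) (S : Set (List M)) : Set (List M) :=
  S ∪ (y :: ·) '' S ∪ List.modifyHead (· + y) '' S

theorem finite_addSummand {S : Set (List M)} (hS : S.Finite) (y : M) : (addSummand y S).Finite :=
  (hS.union (hS.image _)).union (hS.image _)

theorem IsUltrafilterTree.exists_addSummand_subset_absorbing (hU : U + U = U)
    (hQ : IsUltrafilterTree U Q) {S : Set (List M)} (hS : S.Finite) (hSQ : S ⊆ absorbing U Q) :
    ∃ y, addSummand y S ⊆ absorbing U Q := by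
  have hext : ∀ᶠ y in U, ∀ L ∈ S,
      y :: L ∈ absorbing U Q ∧ L.modifyHead (· + y) ∈ absorbing U Q :=
    (eventually_all_finite hS).2 fun L hL =>
      ((isUltrafilterTree_absorbing hU hQ).eventually_cons_mem L (hSQ hL)).and
        (eventually_modifyHead_mem_absorbing hU (hSQ hL))
  obtain ⟨y, hy⟩ := hext.exists
  exact ⟨y, Set.union_subset (Set.union_subset hSQ (Set.image_subset_iff.2 fun L hL => (hy L hL).1))
    (Set.image_subset_iff.2 fun L hL => (hy L hL).2)⟩

/-- The finite sequences whose terms are sums of `b` over successive nonempty finite subsets of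
`{0, …, N - 1}`, as lists with the last term at the head. -/
def sumLists (b : ℕ → M) : ℕ → Set (List M)
  | 0 => {[]}
  | N + 1 => addSummand (b N) (sumLists b N)

theorem finite_sumLists (b : ℕ → M) (N : ℕ) : (sumLists b N).Finite := by
  induction N with
  | zero => exact Set.finite_singleton _
  | succ N ih => exact finite_addSummand ih _

theorem sumLists_mono (b : ℕ → M) : Monotone (sumLists b) :=
  monotone_nat_of_le_succ fun _ => Set.subset_union_left.trans Set.subset_union_left

theorem nil_mem_sumLists (b : ℕ → M) (N : ℕ) : [] ∈ sumLists b N :=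
  sumLists_mono b N.zero_le rfl

theorem cons_mem_sumLists {b : ℕ → M} {N : ℕ} (hL : L ∈ sumLists b N) :
    b N :: L ∈ sumLists b (N + 1) :=
  Or.inl (Or.inr ⟨L, hL, rfl⟩)

theorem add_cons_mem_sumLists {b : ℕ → M} {N : ℕ} {x : M} (hL : x :: L ∈ sumLists b N) :
    (x + b N) :: L ∈ sumLists b (N + 1) :=
  Or.inr ⟨x :: L, hL, rfl⟩

theorem IsUltrafilterTree.exists_sumLists_subset (hU : U + U = U) (hQ : IsUltrafilterTree U Q) :
    ∃ b : ℕ → M, ∀ N, sumLists b N ⊆ Q := by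
  have : Nonempty M := nonempty_of_neBot (U : Filter M)
  choose! f hf using fun (S : Set (List M)) (hS : S.Finite) =>
    hQ.exists_addSummand_subset_absorbing hU hS
  let S : ℕ → Set (List M) := Nat.rec {[]} fun _ S => addSummand (f S) S
  let b : ℕ → M := fun N => f (S N)
  have hbS : ∀ N, sumLists b N = S N := by
    intro N
    induction N with
    | zero => rfl
    | succ N ih => exact congrArg (addSummand (b N)) ih
  have habs : ∀ N, sumLists b N ⊆ absorbing U Q := by
    intro N
    induction N with
    | zero => exact Set.singleton_subset_iff.2 (isUltrafilterTree_absorbing hU hQ).nil_mem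
    | succ N ih =>
      have hstep := hf (sumLists b N) (finite_sumLists b N) ih
      rwa [congrArg f (hbS N)] at hstep
  exact ⟨b, fun N L hL => (habs N hL).1⟩

end SumLists

section FinsetSums

variable {M : Type*} [AddCommMonoid M] {b : ℕ → M} {n : ℕ → ℕ}

theorem cons_sum_Ico_mem_sumLists (hn : StrictMono n) {p q : ℕ} (hpq : p < q) {L : List M}
    (hL : L ∈ sumLists b (n p)) :
    (∑ s ∈ Finset.Ico p q, b (n s)) :: L ∈ sumLists b (n q) := by
  induction q, hpq using Nat.le_induction with
  | base =>
    rw [Nat.Ico_succ_singleton, Finset.sum_singleton]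
    exact sumLists_mono b (hn p.lt_succ_self) (cons_mem_sumLists hL)
  | succ q hpq ih =>
    rw [Finset.sum_Ico_succ_top (Nat.le_of_succ_le hpq)]
    exact sumLists_mono b (hn q.lt_succ_self) (add_cons_mem_sumLists ih)

theorem reverse_ofFn_sum_Ico_mem_sumLists (hn : StrictMono n) {l : ℕ → ℕ} {m : ℕ}
    (hl : ∀ d < m, l d < l (d + 1)) :
    (List.ofFn fun d : Fin m => ∑ s ∈ Finset.Ico (l d) (l (d + 1)), b (n s)).reverse ∈
      sumLists b (n (l m)) := by
  induction m with
  | zero => exact nil_mem_sumLists b _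
  | succ m ih =>
    rw [List.ofFn_succ', List.concat_eq_append, List.reverse_concat]
    exact cons_sum_Ico_mem_sumLists hn (hl m m.lt_succ_self)
      (ih fun d hd => hl d (hd.trans m.lt_succ_self))

end FinsetSums

section Blocks

variable {k m : ℕ} {x y : ℕ → ℕ} {b : ℕ → ℕ → ℕ}

theorem exists_reverse_ofFn_mem_sumLists {a : Fin m → ℕ → ℕ} (ha : a ∈ MTset m b) :
    ∃ N, (List.ofFn a).reverse ∈ sumLists b N := by
  obtain ⟨l, n, -, hl, hn, hsum⟩ := ha
  rw [funext hsum]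
  exact ⟨_, reverse_ofFn_sum_Ico_mem_sumLists hn hl⟩

theorem eventually_suppLT (hx : {n | x n ≠ 0}.Finite) : ∀ᶠ y in 𝓝 (0 : ℕ → ℕ), SuppLT x y := by
  obtain ⟨N, hN⟩ := hx.bddAbove
  have hzero : ∀ᶠ y in 𝓝 (0 : ℕ → ℕ), ∀ n ∈ Set.Iic N, y n = 0 :=
    (eventually_all_finite (Set.finite_Iic N)).2 fun n _ =>
      (continuous_apply n).continuousAt.eventually_mem
        (s := {0}) (mem_nhds_discrete.2 (Set.mem_singleton 0))
  filter_upwards [hzero] with y hy p hp q hq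
  exact (hN hp).trans_lt (not_le.1 fun hqN => hq (hy q hqN))

theorem add_mem_FIN (hx : x ∈ FIN k) (hy : y ∈ FIN k) (hxy : SuppLT x y) : x + y ∈ FIN k := by
  have hdisj : ∀ n, x n = 0 ∨ y n = 0 := fun n => by
    by_contra! h
    exact lt_irrefl n (hxy n h.1 n h.2)
  obtain ⟨hxk, hxfin, p, hp⟩ := hx
  obtain ⟨hyk, hyfin, -⟩ := hy
  have hle : ∀ n, (x + y) n ≤ k := fun n => by
    rcases hdisj n with h | h <;> simp [h, hxk n, hyk n]
  refine ⟨hle, (hxfin.union hyfin).subset fun n hn => ?_, p, (hle p).antisymm ?_⟩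
  · by_contra! h
    simp_all
  · rw [← hp]
    exact Nat.le_add_right _ _

theorem single_mem_FIN (k n : ℕ) : Pi.single n k ∈ FIN k := by
  refine ⟨fun i => ?_, (Set.finite_singleton n).subset fun i hi => ?_, n, Pi.single_eq_same _ _⟩
  · rw [Pi.single_apply]
    split_ifs <;> simp
  · by_contra h
    exact hi (Pi.single_eq_of_ne h _)

theorem nhdsWithin_FIN_neBot (k : ℕ) : (𝓝[FIN k] (0 : ℕ → ℕ)).NeBot := by
  have hlim : Tendsto (fun n => (Pi.single n k : ℕ → ℕ)) atTop (𝓝 0) :=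
    tendsto_pi_nhds.2 fun i => tendsto_const_nhds.congr' <|
      (eventually_gt_atTop i).mono fun n hn => (Pi.single_eq_of_ne (M := fun _ => ℕ) hn.ne k).symm
  exact mem_closure_iff_nhdsWithin_neBot.1
    (mem_closure_of_tendsto hlim (Eventually.of_forall (single_mem_FIN k)))

theorem eventually_eventually_add_mem_of_mem_nhdsWithin_FIN {s : Set (ℕ → ℕ)}
    (hs : s ∈ 𝓝[FIN k] (0 : ℕ → ℕ)) :
    ∀ᶠ x in 𝓝[FIN k] (0 : ℕ → ℕ), ∀ᶠ y in 𝓝[FIN k] (0 : ℕ → ℕ), x + y ∈ s := by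
  rw [mem_nhdsWithin] at hs
  obtain ⟨O, hO, h0, hOs⟩ := hs
  filter_upwards [mem_nhdsWithin_of_mem_nhds (hO.mem_nhds h0), self_mem_nhdsWithin] with x hxO hx
  have hadd : ∀ᶠ y in 𝓝 (0 : ℕ → ℕ), x + y ∈ O :=
    (continuous_const_add x).continuousAt.eventually_mem (hO.mem_nhds (by rwa [add_zero]))
  filter_upwards [mem_nhdsWithin_of_mem_nhds hadd, self_mem_nhdsWithin,
    mem_nhdsWithin_of_mem_nhds (eventually_suppLT hx.2.1)] with y hyO hy hxy
  exact hOs ⟨hyO, add_mem_FIN hx hy hxy⟩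

theorem exists_idempotent_ultrafilter_le_nhdsWithin_FIN (k : ℕ) :
    ∃ U : Ultrafilter (ℕ → ℕ), U + U = U ∧ ↑U ≤ 𝓝[FIN k] (0 : ℕ → ℕ) :=
  have := nhdsWithin_FIN_neBot k
  exists_idempotent_ultrafilter_le fun _ => eventually_eventually_add_mem_of_mem_nhdsWithin_FIN

/-- The finite block sequences in `FIN k`, as lists with the last block at the head. -/
def blockLists (k : ℕ) : Set (List (ℕ → ℕ)) :=
  {L | (∀ x ∈ L, x ∈ FIN k) ∧ L.Pairwise fun x y => SuppLT y x}

theorem isUltrafilterTree_blockLists {U : Ultrafilter (ℕ → ℕ)}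
    (hU : ↑U ≤ 𝓝[FIN k] (0 : ℕ → ℕ)) : IsUltrafilterTree U (blockLists k) where
  nil_mem := by simp [blockLists]
  eventually_cons_mem L hL := by
    have hlast : ∀ᶠ y in 𝓝 (0 : ℕ → ℕ), ∀ x ∈ L, SuppLT x y :=
      (eventually_all_finite L.finite_toSet).2 fun x hx => eventually_suppLT (hL.1 x hx).2.1
    filter_upwards [hU self_mem_nhdsWithin, hU (mem_nhdsWithin_of_mem_nhds hlast)] with y hy hLy
    exact ⟨List.forall_mem_cons.2 ⟨hy, hL.1⟩, List.pairwise_cons.2 ⟨hLy, hL.2⟩⟩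

theorem isBlockTuple_of_reverse_ofFn_mem_blockLists {t : Fin m → ℕ → ℕ}
    (ht : (List.ofFn t).reverse ∈ blockLists k) : IsBlockTuple k m t := by
  have hpair : ∀ i j, i < j → SuppLT (t i) (t j) :=
    List.pairwise_ofFn.1 (List.pairwise_reverse.1 ht.2)
  exact ⟨fun d => ht.1 _ (by simp), fun d _ => hpair _ _ (Fin.mk_lt_mk.2 d.lt_succ_self)⟩

theorem isBlockSeq_of_sumLists_subset (hb : ∀ N, sumLists b N ⊆ blockLists k) :
    IsBlockSeq k b := by
  have hconsec : ∀ n, [b (n + 1), b n] ∈ blockLists k := fun n =>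
    hb _ (cons_mem_sumLists (cons_mem_sumLists (nil_mem_sumLists b n)))
  exact ⟨fun n => (hconsec n).1 _ (by simp),
    fun n => (List.pairwise_cons.1 (hconsec n).2).1 _ (by simp)⟩

end Blocks

theorem milliken_taylor_general (k m : ℕ) {α : Type*} (c : (Fin m → ℕ → ℕ) → α)
    (hc : (c '' {t | IsBlockTuple k m t}).Finite) :
    ∃ b : ℕ → ℕ → ℕ, IsBlockSeq k b ∧
      ∀ a ∈ MTset m b, ∀ a' ∈ MTset m b, c a = c a' := by
  obtain ⟨U, hU, hle⟩ := exists_idempotent_ultrafilter_le_nhdsWithin_FIN k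
  have hfin : (c '' {t | (List.ofFn t).reverse ∈ blockLists k}).Finite :=
    hc.subset (Set.image_mono fun _ => isBlockTuple_of_reverse_ofFn_mem_blockLists)
  obtain ⟨j, Q, hQ, htree, hj⟩ :=
    (isUltrafilterTree_blockLists hle).exists_monochromatic_subtree hfin
  obtain ⟨b, hb⟩ := htree.exists_sumLists_subset hU
  have hcolor : ∀ a ∈ MTset m b, c a = j := fun a ha =>
    have ⟨N, hN⟩ := exists_reverse_ofFn_mem_sumLists ha
    hj a (hb N hN)
  exact ⟨b, isBlockSeq_of_sumLists_subset fun N => (hb N).trans hQ,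
    fun a ha a' ha' => (hcolor a ha).trans (hcolor a' ha').symm⟩

/-- The Milliken–Taylor theorem on finite unions: for every finite coloring of
`FIN_1^[m]` there is an infinite block sequence `(b_n)` in `FIN 1` such that
`TS_1(b_n)^[m]` is monochromatic. -/
theorem milliken_taylor (m : ℕ) (hm : 1 ≤ m) (r : ℕ) (c : (Fin m → ℕ → ℕ) → ℕ)
    (hc : ∀ t : Fin m → ℕ → ℕ, IsBlockTuple 1 m t → c t < r) :
    ∃ b : ℕ → ℕ → ℕ, IsBlockSeq 1 b ∧
      ∀ a ∈ MTset m b, ∀ a' ∈ MTset m b, c a = c a' :=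
  milliken_taylor_general 1 m c <|
    (Set.finite_Iio r).subset (Set.image_subset_iff.2 hc)
end
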